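/- arXiv:1703.10434 — 2 statements merged into one kernel-verified Lean document; each statement's English description precedes it below -/
import Mathlib

section
/- Symmetry of mutual coherence: For states ρ_S on ℂ^{d_S} and ρ_R on ℂ^{d_R}, the following are equivalent: (i) there exists an effect E on ℂ^{d_S}⊗ℂ^{d_R} with τ_T(E) = E such that tr((τ_{S*}(ρ_S) ⊗ ρ_R) E) ≠ tr((ρ_S ⊗ ρ_R) E); (ii) there exists an effect E' with τ_T(E') = E' such that tr((ρ_S ⊗ τ_{R*}(ρ_R)) E') ≠ tr((ρ_S ⊗ ρ_R) E'). Moreover, if (i) holds then necessarily τ_{S*}(ρ_S) ≠ ρ_S and τ_{R*}(ρ_R) ≠ ρ_R. -/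
open Matrix
open scoped Kronecker ComplexOrder

noncomputable section

/-- The total-number spectral projection `P_N = ∑_{n+m=N} P^S_n ⊗ P^R_m`. -/
def jointProj {dS dR : ℕ} (SS SR : Finset ℤ)
    (PS : ℤ → Matrix (Fin dS) (Fin dS) ℂ) (PR : ℤ → Matrix (Fin dR) (Fin dR) ℂ)
    (N : ℤ) : Matrix (Fin dS × Fin dR) (Fin dS × Fin dR) ℂ :=
  ∑ p ∈ (SS ×ˢ SR).filter (fun p => p.1 + p.2 = N), PS p.1 ⊗ₖ PR p.2

/-- The global dephasing map `τ_T(C) = ∑_N P_N C P_N`. -/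
def tauTotal {dS dR : ℕ} (SS SR : Finset ℤ)
    (PS : ℤ → Matrix (Fin dS) (Fin dS) ℂ) (PR : ℤ → Matrix (Fin dR) (Fin dR) ℂ)
    (C : Matrix (Fin dS × Fin dR) (Fin dS × Fin dR) ℂ) :
    Matrix (Fin dS × Fin dR) (Fin dS × Fin dR) ℂ :=
  ∑ N ∈ (SS ×ˢ SR).image (fun p => p.1 + p.2),
    jointProj SS SR PS PR N * C * jointProj SS SR PS PR N

/-- The local dephasing map `τ(A) = ∑ₙ Pₙ A Pₙ` (also `τ_*` on states). -/
def dephase {d : ℕ} (S : Finset ℤ) (P : ℤ → Matrix (Fin d) (Fin d) ℂ)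
    (A : Matrix (Fin d) (Fin d) ℂ) : Matrix (Fin d) (Fin d) ℂ :=
  ∑ n ∈ S, P n * A * P n

/-!
Dephasing is self-adjoint for the trace pairing, so it can be moved from the states onto `E`: it
suffices that `τ_S ⊗ id` and `id ⊗ τ_R` agree on every `E` with `τ_T(E) = E`. Such an `E` has no
blocks `(P^S_n ⊗ P^R_m) E (P^S_n' ⊗ P^R_m')` with `n + m ≠ n' + m'`, so each of the two maps
discards exactly the blocks with `(n, m) ≠ (n', m')`: once one of the two numbers is preserved,
so is the other. Hence the same `E` witnesses both (i) and (ii).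
-/

section Pinching

variable {ι κ A : Type*} [NonUnitalSemiring A]

/-- The pinching map of a finite family `e` in a semiring: the common form of the dephasing maps
`τ_S`, `τ_R` and `τ_T`, for which `e` consists of orthogonal idempotents. -/
def pinching (s : Finset ι) (e : ι → A) (x : A) : A :=
  ∑ i ∈ s, e i * x * e i

theorem mul_pinching_mul_eq_zero {s : Finset ι} {e : ι → A} {a b : A}
    (h : ∀ i ∈ s, a * e i = 0 ∨ e i * b = 0) (x : A) : a * pinching s e x * b = 0 := by
  rw [pinching, Finset.mul_sum, Finset.sum_mul]
  refine Finset.sum_eq_zero fun i hi ↦ ?_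
  have hassoc : a * (e i * x * e i) * b = a * e i * x * (e i * b) := by simp only [mul_assoc]
  rcases h i hi with ha | hb
  · rw [hassoc, ha, zero_mul, zero_mul]
  · rw [hassoc, hb, mul_zero]

theorem sum_mul_mul_sum_eq_pinching {s : Finset ι} {e : ι → A} {x : A}
    (h : (s : Set ι).Pairwise fun i j ↦ e i * x * e j = 0) :
    (∑ i ∈ s, e i) * x * ∑ i ∈ s, e i = pinching s e x := by
  rw [Finset.sum_mul, Finset.sum_mul_sum]
  exact Finset.sum_congr rfl fun i hi ↦
    Finset.sum_eq_single_of_mem i hi fun j hj hji ↦ h hi hj hji.symm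

theorem pinching_sum_comm {s : Finset ι} {t : Finset κ} {e : ι → κ → A} {x : A}
    (hrow : ∀ i ∈ s, (t : Set κ).Pairwise fun j k ↦ e i j * x * e i k = 0)
    (hcol : ∀ j ∈ t, (s : Set ι).Pairwise fun i k ↦ e i j * x * e k j = 0) :
    pinching s (fun i ↦ ∑ j ∈ t, e i j) x = pinching t (fun j ↦ ∑ i ∈ s, e i j) x :=
  calc pinching s (fun i ↦ ∑ j ∈ t, e i j) x
    _ = ∑ i ∈ s, ∑ j ∈ t, e i j * x * e i j :=
        Finset.sum_congr rfl fun i hi ↦ sum_mul_mul_sum_eq_pinching (hrow i hi)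
    _ = ∑ j ∈ t, ∑ i ∈ s, e i j * x * e i j := Finset.sum_comm
    _ = pinching t (fun j ↦ ∑ i ∈ s, e i j) x :=
        Finset.sum_congr rfl fun j hj ↦ (sum_mul_mul_sum_eq_pinching (hcol j hj)).symm

theorem trace_pinching_mul {m R : Type*} [Fintype m] [NonUnitalCommSemiring R]
    (s : Finset ι) (e : ι → Matrix m m R) (X Y : Matrix m m R) :
    (pinching s e X * Y).trace = (X * pinching s e Y).trace := by
  simp only [pinching, Matrix.sum_mul, Matrix.mul_sum, trace_sum]
  refine Finset.sum_congr rfl fun i _ ↦ ?_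
  calc (e i * X * e i * Y).trace
    _ = (e i * (X * (e i * Y))).trace := by simp only [Matrix.mul_assoc]
    _ = (X * (e i * Y) * e i).trace := trace_mul_comm _ _
    _ = (X * (e i * Y * e i)).trace := by simp only [Matrix.mul_assoc]

end Pinching

section Kronecker

variable {ι κ l m n p R : Type*} [CommSemiring R]

theorem sum_kronecker (s : Finset ι) (P : ι → Matrix l m R) (B : Matrix n p R) :
    (∑ i ∈ s, P i) ⊗ₖ B = ∑ i ∈ s, P i ⊗ₖ B :=
  map_sum ((kroneckerBilinear (R := R)).flip B) P s

theorem kronecker_sum (t : Finset κ) (A : Matrix l m R) (Q : κ → Matrix n p R) :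
    A ⊗ₖ (∑ j ∈ t, Q j) = ∑ j ∈ t, A ⊗ₖ Q j :=
  map_sum (kroneckerBilinear (R := R) A) Q t

variable [Fintype m] [Fintype n]

theorem pinching_kronecker [DecidableEq n] (s : Finset ι) (P : ι → Matrix m m R)
    (A : Matrix m m R) (B : Matrix n n R) :
    pinching s P A ⊗ₖ B = pinching s (fun i ↦ P i ⊗ₖ 1) (A ⊗ₖ B) := by
  simp only [pinching, sum_kronecker, ← mul_kronecker_mul, Matrix.one_mul, Matrix.mul_one]

theorem kronecker_pinching [DecidableEq m] (t : Finset κ) (Q : κ → Matrix n n R)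
    (A : Matrix m m R) (B : Matrix n n R) :
    A ⊗ₖ pinching t Q B = pinching t (fun j ↦ 1 ⊗ₖ Q j) (A ⊗ₖ B) := by
  simp only [pinching, kronecker_sum, ← mul_kronecker_mul, Matrix.one_mul, Matrix.mul_one]

theorem pairwise_kronecker_mul_kronecker_eq_zero {P : ι → Matrix m m R} {Q : κ → Matrix n n R}
    (hP : Pairwise fun i j ↦ P i * P j = 0) (hQ : Pairwise fun i j ↦ Q i * Q j = 0) :
    Pairwise fun p q : ι × κ ↦ (P p.1 ⊗ₖ Q p.2) * (P q.1 ⊗ₖ Q q.2) = 0 := by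
  intro p q hpq
  rw [← mul_kronecker_mul]
  by_cases hfst : p.1 = q.1
  · rw [hQ fun hsnd ↦ hpq (Prod.ext hfst hsnd), kronecker_zero]
  · rw [hP hfst, zero_kronecker]

theorem trace_pinching_kronecker_mul [DecidableEq m] [DecidableEq n]
    {s : Finset ι} {t : Finset κ} {P : ι → Matrix m m R} {Q : κ → Matrix n n R}
    (hPsum : ∑ i ∈ s, P i = 1) (hQsum : ∑ j ∈ t, Q j = 1) {E : Matrix (m × n) (m × n) R}
    (hrow : ∀ i ∈ s, (t : Set κ).Pairwise fun j k ↦ (P i ⊗ₖ Q j) * E * (P i ⊗ₖ Q k) = 0)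
    (hcol : ∀ j ∈ t, (s : Set ι).Pairwise fun i k ↦ (P i ⊗ₖ Q j) * E * (P k ⊗ₖ Q j) = 0)
    (A : Matrix m m R) (B : Matrix n n R) :
    ((pinching s P A ⊗ₖ B) * E).trace = ((A ⊗ₖ pinching t Q B) * E).trace := by
  have hlocal : pinching s (fun i ↦ P i ⊗ₖ 1) E = pinching t (fun j ↦ 1 ⊗ₖ Q j) E := by
    simpa only [← kronecker_sum, ← sum_kronecker, hPsum, hQsum] using pinching_sum_comm hrow hcol
  rw [pinching_kronecker, trace_pinching_mul, hlocal, ← trace_pinching_mul, ← kronecker_pinching]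

end Kronecker

section TotalCharge

variable {ι m n R : Type*} [Add ι] [DecidableEq ι] [Fintype m] [Fintype n] [CommSemiring R]
  {s t : Finset ι} {P : ι → Matrix m m R} {Q : ι → Matrix n n R}

/-- The total projection `∑ P i ⊗ Q j` over `i ∈ s`, `j ∈ t` with `i + j = N`: `jointProj` for
matrices over any commutative semiring, graded by any additive structure. -/
def totalProj (s t : Finset ι) (P : ι → Matrix m m R) (Q : ι → Matrix n n R) (N : ι) :
    Matrix (m × n) (m × n) R :=
  ∑ p ∈ (s ×ˢ t).filter (fun p ↦ p.1 + p.2 = N), P p.1 ⊗ₖ Q p.2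

/-- The global dephasing map, pinching by the total projections: `tauTotal` in the generality of
`totalProj`. -/
def totalPinching (s t : Finset ι) (P : ι → Matrix m m R) (Q : ι → Matrix n n R) :
    Matrix (m × n) (m × n) R → Matrix (m × n) (m × n) R :=
  pinching ((s ×ˢ t).image fun p ↦ p.1 + p.2) (totalProj s t P Q)

theorem kronecker_mul_totalProj_eq_zero
    (hP : Pairwise fun i j ↦ P i * P j = 0) (hQ : Pairwise fun i j ↦ Q i * Q j = 0)
    {i j N : ι} (hN : i + j ≠ N) : (P i ⊗ₖ Q j) * totalProj s t P Q N = 0 := by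
  rw [totalProj, Matrix.mul_sum]
  refine Finset.sum_eq_zero fun p hp ↦
    pairwise_kronecker_mul_kronecker_eq_zero hP hQ (i := (i, j)) ?_
  rintro rfl
  exact hN (Finset.mem_filter.1 hp).2

theorem totalProj_mul_kronecker_eq_zero
    (hP : Pairwise fun i j ↦ P i * P j = 0) (hQ : Pairwise fun i j ↦ Q i * Q j = 0)
    {i j N : ι} (hN : i + j ≠ N) : totalProj s t P Q N * (P i ⊗ₖ Q j) = 0 := by
  rw [totalProj, Matrix.sum_mul]
  refine Finset.sum_eq_zero fun p hp ↦
    pairwise_kronecker_mul_kronecker_eq_zero hP hQ (j := (i, j)) ?_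
  rintro rfl
  exact hN (Finset.mem_filter.1 hp).2

theorem kronecker_mul_totalPinching_mul_kronecker_eq_zero
    (hP : Pairwise fun i j ↦ P i * P j = 0) (hQ : Pairwise fun i j ↦ Q i * Q j = 0)
    {i j k l : ι} (hne : i + j ≠ k + l) (C : Matrix (m × n) (m × n) R) :
    (P i ⊗ₖ Q j) * totalPinching s t P Q C * (P k ⊗ₖ Q l) = 0 := by
  refine mul_pinching_mul_eq_zero (fun N _ ↦ ?_) C
  rcases eq_or_ne (i + j) N with rfl | hN
  · exact .inr (totalProj_mul_kronecker_eq_zero hP hQ hne.symm)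
  · exact .inl (kronecker_mul_totalProj_eq_zero hP hQ hN)

variable [IsCancelAdd ι] [DecidableEq m] [DecidableEq n]

theorem trace_pinching_kronecker_mul_of_totalPinching_eq
    (hP : Pairwise fun i j ↦ P i * P j = 0) (hPsum : ∑ i ∈ s, P i = 1)
    (hQ : Pairwise fun i j ↦ Q i * Q j = 0) (hQsum : ∑ j ∈ t, Q j = 1)
    {E : Matrix (m × n) (m × n) R} (hE : totalPinching s t P Q E = E)
    (A : Matrix m m R) (B : Matrix n n R) :
    ((pinching s P A ⊗ₖ B) * E).trace = ((A ⊗ₖ pinching t Q B) * E).trace := by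
  have hblock {i j k l : ι} (hne : i + j ≠ k + l) : (P i ⊗ₖ Q j) * E * (P k ⊗ₖ Q l) = 0 :=
    hE ▸ kronecker_mul_totalPinching_mul_kronecker_eq_zero hP hQ hne E
  exact trace_pinching_kronecker_mul hPsum hQsum
    (fun i _ _ _ _ _ hne ↦ hblock fun h ↦ hne (add_left_cancel h))
    (fun j _ _ _ _ _ hne ↦ hblock fun h ↦ hne (add_right_cancel h)) A B

theorem mutual_coherence_symmetry_general
    (hP : Pairwise fun i j ↦ P i * P j = 0) (hPsum : ∑ i ∈ s, P i = 1)
    (hQ : Pairwise fun i j ↦ Q i * Q j = 0) (hQsum : ∑ j ∈ t, Q j = 1)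
    (A : Matrix m m R) (B : Matrix n n R) (𝓔 : Set (Matrix (m × n) (m × n) R)) :
    ((∃ E ∈ 𝓔, totalPinching s t P Q E = E ∧
        ((pinching s P A ⊗ₖ B) * E).trace ≠ ((A ⊗ₖ B) * E).trace)
      ↔ (∃ E ∈ 𝓔, totalPinching s t P Q E = E ∧
        ((A ⊗ₖ pinching t Q B) * E).trace ≠ ((A ⊗ₖ B) * E).trace)) ∧
    ((∃ E ∈ 𝓔, totalPinching s t P Q E = E ∧
        ((pinching s P A ⊗ₖ B) * E).trace ≠ ((A ⊗ₖ B) * E).trace) →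
      pinching s P A ≠ A ∧ pinching t Q B ≠ B) := by
  have htrace {E} (hE : totalPinching s t P Q E = E) :=
    trace_pinching_kronecker_mul_of_totalPinching_eq hP hPsum hQ hQsum hE A B
  constructor
  · refine exists_congr fun E ↦ and_congr_right fun _ ↦ and_congr_right fun hE ↦ ?_
    rw [htrace hE]
  · rintro ⟨E, -, hE, hne⟩
    exact ⟨fun hA ↦ hne (by rw [hA]), fun hB ↦ hne (by rw [htrace hE, hB])⟩

end TotalCharge

theorem dephase_eq_pinching {d : ℕ} (S : Finset ℤ) (P : ℤ → Matrix (Fin d) (Fin d) ℂ) :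
    dephase S P = pinching S P :=
  rfl

theorem tauTotal_eq_totalPinching {dS dR : ℕ} (SS SR : Finset ℤ)
    (PS : ℤ → Matrix (Fin dS) (Fin dS) ℂ) (PR : ℤ → Matrix (Fin dR) (Fin dR) ℂ) :
    tauTotal SS SR PS PR = totalPinching SS SR PS PR :=
  rfl

/-- **Symmetry of mutual coherence**: an invariant effect witnesses
`τ_{S*}(ρ_S) ⊗ ρ_R ≁ ρ_S ⊗ ρ_R` iff one witnesses `ρ_S ⊗ τ_{R*}(ρ_R) ≁ ρ_S ⊗ ρ_R`; and then
necessarily both `τ_{S*}(ρ_S) ≠ ρ_S` and `τ_{R*}(ρ_R) ≠ ρ_R`. -/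
theorem mutual_coherence_symmetry {dS dR : ℕ}
    (SS SR : Finset ℤ)
    (PS : ℤ → Matrix (Fin dS) (Fin dS) ℂ) (PR : ℤ → Matrix (Fin dR) (Fin dR) ℂ)
    (hPSh : ∀ n, (PS n).IsHermitian) (hPSi : ∀ n, PS n * PS n = PS n)
    (hPSo : ∀ n m, n ≠ m → PS n * PS m = 0)
    (hPSsupp : ∀ n, n ∉ SS → PS n = 0) (hPSsum : ∑ n ∈ SS, PS n = 1)
    (hPRh : ∀ m, (PR m).IsHermitian) (hPRi : ∀ m, PR m * PR m = PR m)
    (hPRo : ∀ n m, n ≠ m → PR n * PR m = 0)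
    (hPRsupp : ∀ m, m ∉ SR → PR m = 0) (hPRsum : ∑ m ∈ SR, PR m = 1)
    (ρS : Matrix (Fin dS) (Fin dS) ℂ) (hρS : ρS.PosSemidef) (hρStr : ρS.trace = 1)
    (ρR : Matrix (Fin dR) (Fin dR) ℂ) (hρR : ρR.PosSemidef) (hρRtr : ρR.trace = 1) :
    ((∃ E : Matrix (Fin dS × Fin dR) (Fin dS × Fin dR) ℂ,
        E.PosSemidef ∧ (1 - E).PosSemidef ∧ tauTotal SS SR PS PR E = E ∧
        ((dephase SS PS ρS ⊗ₖ ρR) * E).trace ≠ ((ρS ⊗ₖ ρR) * E).trace)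
      ↔ (∃ E : Matrix (Fin dS × Fin dR) (Fin dS × Fin dR) ℂ,
        E.PosSemidef ∧ (1 - E).PosSemidef ∧ tauTotal SS SR PS PR E = E ∧
        ((ρS ⊗ₖ dephase SR PR ρR) * E).trace ≠ ((ρS ⊗ₖ ρR) * E).trace)) ∧
    ((∃ E : Matrix (Fin dS × Fin dR) (Fin dS × Fin dR) ℂ,
        E.PosSemidef ∧ (1 - E).PosSemidef ∧ tauTotal SS SR PS PR E = E ∧
        ((dephase SS PS ρS ⊗ₖ ρR) * E).trace ≠ ((ρS ⊗ₖ ρR) * E).trace) →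
      dephase SS PS ρS ≠ ρS ∧ dephase SR PR ρR ≠ ρR) := by
  simpa only [dephase_eq_pinching, tauTotal_eq_totalPinching, Set.mem_ofPred_eq, and_assoc] using
    mutual_coherence_symmetry_general hPSo hPSsum hPRo hPRsum ρS ρR
      {E | E.PosSemidef ∧ (1 - E).PosSemidef}

end
end

section
/- Mutual coherence is bounded by absolute coherence: For all states ρ_S on ℂ^{d_S} and ρ_R on ℂ^{d_R}, M(ρ_S, ρ_R) ≤ min{C(ρ_S), C(ρ_R)}, where C(ρ_S) is the absolute coherence with respect to τ_{S*} and C(ρ_R) with respect to τ_{R*}. In particular, if ρ_R (or ρ_S) is invariant (τ_{R*}(ρ_R) = ρ_R, resp. τ_{S*}(ρ_S) = ρ_S), then M(ρ_S, ρ_R) = 0. -/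
open Matrix
open scoped Kronecker ComplexOrder

noncomputable section

/-- Absolute coherence: `C(ρ) = sup_E |tr(ρE) − tr(τ_*(ρ)E)|`, supremum over effects. -/
def absCoherence {d : ℕ} (S : Finset ℤ) (P : ℤ → Matrix (Fin d) (Fin d) ℂ)
    (ρ : Matrix (Fin d) (Fin d) ℂ) : ℝ :=
  sSup {x : ℝ | ∃ E : Matrix (Fin d) (Fin d) ℂ, E.PosSemidef ∧ (1 - E).PosSemidef ∧
    x = ‖(ρ * E).trace - (dephase S P ρ * E).trace‖}

/-- Mutual coherence: `M(ρ_S,ρ_R) = sup_E |tr((τ_{S*}(ρ_S)⊗ρ_R − ρ_S⊗ρ_R)E)|`, supremum over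
invariant effects `E` (`τ_T(E) = E`). -/
def mutCoherence {dS dR : ℕ} (SS SR : Finset ℤ)
    (PS : ℤ → Matrix (Fin dS) (Fin dS) ℂ) (PR : ℤ → Matrix (Fin dR) (Fin dR) ℂ)
    (ρS : Matrix (Fin dS) (Fin dS) ℂ) (ρR : Matrix (Fin dR) (Fin dR) ℂ) : ℝ :=
  sSup {x : ℝ | ∃ E : Matrix (Fin dS × Fin dR) (Fin dS × Fin dR) ℂ,
    E.PosSemidef ∧ (1 - E).PosSemidef ∧ tauTotal SS SR PS PR E = E ∧
    x = ‖((dephase SS PS ρS ⊗ₖ ρR - ρS ⊗ₖ ρR) * E).trace‖}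

/-!
Averaging an effect `E` on the composite system against a state of one factor gives an effect on
the other factor, and `tr ((A ⊗ ρ) E) = tr (A F)` for the averaged effect `F`. Averaging against
`ρ_R` turns each term in the supremum defining `M(ρ_S, ρ_R)` into a term of the supremum defining
`C(ρ_S)`.

For the bound by `C(ρ_R)`, invariance under `τ_T` makes every block of `E` between different total
numbers vanish. Hence dephasing `E` on `S` alone and on `R` alone both leave exactly the blocks
`(P^S_n ⊗ P^R_m) E (P^S_n ⊗ P^R_m)`. By duality, `τ_{S*}(ρ_S) ⊗ ρ_R` and `ρ_S ⊗ τ_{R*}(ρ_R)` give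
`E` the same expectation, and averaging against `ρ_S` concludes as before.
-/

section Effect

variable {n m 𝕜 : Type*} [RCLike 𝕜]

open scoped MatrixOrder in
theorem trace_mul_nonneg_of_posSemidef [Fintype n] {A B : Matrix n n 𝕜} (hA : A.PosSemidef)
    (hB : B.PosSemidef) : 0 ≤ (A * B).trace := by
  classical
  obtain ⟨C, rfl⟩ := CStarAlgebra.nonneg_iff_eq_star_mul_self.mp hA.nonneg
  rw [Matrix.mul_assoc, trace_mul_comm]
  exact (hB.mul_mul_conjTranspose_same C).trace_nonneg

/-- Quantum effects, the operators `0 ≤ E ≤ 1`. The Loewner order is spelled out through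
`PosSemidef`, as in `absCoherence` and `mutCoherence`. -/
structure IsEffect [DecidableEq n] (E : Matrix n n 𝕜) : Prop where
  posSemidef : E.PosSemidef
  one_sub_posSemidef : (1 - E).PosSemidef

theorem IsEffect.submatrix_equiv [DecidableEq n] [DecidableEq m] {E : Matrix n n 𝕜}
    (hE : IsEffect E) (e : m ≃ n) : IsEffect (E.submatrix e e) where
  posSemidef := hE.posSemidef.submatrix e
  one_sub_posSemidef := by
    have h := hE.one_sub_posSemidef.submatrix e
    rwa [submatrix_sub, Pi.sub_apply, Pi.sub_apply, submatrix_one_equiv] at h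

open scoped MatrixOrder Matrix.Norms.L2Operator in
theorem IsEffect.l2_opNorm_le_one [Fintype n] [DecidableEq n] {E : Matrix n n ℂ} (hE : IsEffect E) :
    ‖E‖ ≤ 1 :=
  (CStarAlgebra.norm_le_one_iff_of_nonneg E hE.posSemidef.nonneg).mpr
    (Matrix.le_iff.mpr hE.one_sub_posSemidef)

open scoped Matrix.Norms.L2Operator in
theorem exists_norm_apply_isEffect_le [Finite n] [DecidableEq n]
    (f : Matrix n n ℂ →ₗ[ℂ] ℂ) : ∃ c : ℝ, ∀ E, IsEffect E → ‖f E‖ ≤ c := by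
  have := Fintype.ofFinite n
  exact ⟨‖f.toContinuousLinearMap‖, fun _ hE =>
    f.toContinuousLinearMap.unit_le_opNorm _ hE.l2_opNorm_le_one⟩

end Effect

section Slice

variable {n m R : Type*} [Fintype m]

/-- The slice map `id ⊗ tr(ρ ·)`: averages an operator on the composite system against `ρ` in the
second factor. -/
def slice [NonUnitalNonAssocSemiring R] (ρ : Matrix m m R) (E : Matrix (n × m) (n × m) R) :
    Matrix n n R :=
  of fun i j => (ρ * E.submatrix (Prod.mk i) (Prod.mk j)).trace

theorem trace_kronecker_mul_eq_trace_mul_slice [Fintype n] [CommSemiring R] (A : Matrix n n R)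
    (ρ : Matrix m m R) (E : Matrix (n × m) (n × m) R) :
    ((A ⊗ₖ ρ) * E).trace = (A * slice ρ E).trace := by
  simp only [trace, diag, mul_apply, Fintype.sum_prod_type, kronecker_apply, slice, of_apply,
    submatrix_apply, Finset.mul_sum, mul_assoc]
  exact Finset.sum_congr rfl fun i _ => Finset.sum_comm

theorem trace_kronecker_mul_eq_trace_swap [Fintype n] [CommSemiring R] (A : Matrix n n R)
    (B : Matrix m m R) (E : Matrix (n × m) (n × m) R) :
    ((A ⊗ₖ B) * E).trace =
      ((B ⊗ₖ A) * E.submatrix (Equiv.prodComm m n) (Equiv.prodComm m n)).trace := by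
  have hswap : B ⊗ₖ A = (A ⊗ₖ B).submatrix (Equiv.prodComm m n) (Equiv.prodComm m n) := by
    ext ⟨i, k⟩ ⟨j, l⟩
    exact mul_comm _ _
  rw [hswap, submatrix_mul_equiv]
  exact (Equiv.sum_comp (Equiv.prodComm m n) fun x => ((A ⊗ₖ B) * E) x x).symm

theorem slice_sub [NonUnitalNonAssocRing R] (ρ : Matrix m m R)
    (E F : Matrix (n × m) (n × m) R) : slice ρ (E - F) = slice ρ E - slice ρ F := by
  ext i j
  simp [slice, submatrix_sub, Matrix.mul_sub]

theorem slice_one [DecidableEq n] [DecidableEq m] [NonAssocSemiring R] (ρ : Matrix m m R) :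
    slice ρ (1 : Matrix (n × m) (n × m) R) = diagonal fun _ => ρ.trace := by
  ext i j
  by_cases hij : i = j
  · subst hij
    simp [slice, submatrix_one _ (Prod.mk_right_injective i)]
  · simp [slice, trace, mul_apply, one_apply, hij]

theorem isHermitian_slice [CommSemiring R] [StarRing R] {ρ : Matrix m m R}
    {E : Matrix (n × m) (n × m) R} (hρ : ρ.IsHermitian) (hE : E.IsHermitian) :
    (slice ρ E).IsHermitian := by
  ext i j
  rw [conjTranspose_apply, slice, of_apply, of_apply, ← trace_conjTranspose, conjTranspose_mul,
    conjTranspose_submatrix, hρ.eq, hE.eq, trace_mul_comm]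

variable {𝕜 : Type*} [RCLike 𝕜] {ρ : Matrix m m 𝕜} {E : Matrix (n × m) (n × m) 𝕜}

theorem posSemidef_slice [Finite n] (hρ : ρ.PosSemidef) (hE : E.PosSemidef) :
    (slice ρ E).PosSemidef := by
  have := Fintype.ofFinite n
  refine .of_dotProduct_mulVec_nonneg (isHermitian_slice hρ.isHermitian hE.isHermitian)
    fun x => ?_
  have hquad : star x ⬝ᵥ (slice ρ E *ᵥ x) = ((vecMulVec x (star x) ⊗ₖ ρ) * E).trace := by
    rw [trace_kronecker_mul_eq_trace_mul_slice, vecMulVec_mul, trace_vecMulVec, dotProduct_mulVec,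
      dotProduct_comm]
  rw [hquad]
  exact trace_mul_nonneg_of_posSemidef ((posSemidef_vecMulVec_self_star x).kronecker hρ) hE

theorem isEffect_slice [Finite n] [DecidableEq n] [DecidableEq m] (hρ : ρ.PosSemidef)
    (hρtr : ρ.trace = 1) (hE : IsEffect E) : IsEffect (slice ρ E) where
  posSemidef := posSemidef_slice hρ hE.posSemidef
  one_sub_posSemidef := by
    have hone : slice ρ (1 : Matrix (n × m) (n × m) 𝕜) = 1 := by
      rw [slice_one, hρtr, diagonal_one]
    rw [← hone, ← slice_sub]
    exact posSemidef_slice hρ hE.one_sub_posSemidef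

end Slice

section Pinch

variable {ι κ R l m n p : Type*}

/-- The pinching `∑ i ∈ s, Q i * A * Q i`, the common form of the local and global dephasing
maps. -/
def pinch [NonUnitalSemiring R] (s : Finset ι) (Q : ι → R) (A : R) : R :=
  ∑ i ∈ s, Q i * A * Q i

theorem mul_pinch_mul_eq_zero [NonUnitalSemiring R] {s : Finset ι} {Q : ι → R} {a b : R} (A : R)
    (h : ∀ i ∈ s, a * Q i = 0 ∨ Q i * b = 0) : a * pinch s Q A * b = 0 := by
  rw [pinch, Finset.mul_sum, Finset.sum_mul]
  refine Finset.sum_eq_zero fun i hi => ?_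
  rcases h i hi with haQ | hQb
  · rw [mul_assoc (Q i), ← mul_assoc a, haQ, zero_mul, zero_mul]
  · rw [mul_assoc, mul_assoc (Q i * A), hQb, mul_zero, mul_zero]

theorem pinch_sum_of_offDiag_eq_zero [NonUnitalSemiring R] (s : Finset ι) (t : Finset κ)
    (Q : ι → κ → R) (A : R) (h : ∀ i j k, j ≠ k → Q i j * A * Q i k = 0) :
    pinch s (fun i => ∑ j ∈ t, Q i j) A = ∑ i ∈ s, ∑ j ∈ t, Q i j * A * Q i j := by
  refine Finset.sum_congr rfl fun i _ => ?_
  rw [Finset.sum_mul, Finset.sum_mul]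
  refine Finset.sum_congr rfl fun j hj => ?_
  rw [Finset.mul_sum]
  exact Finset.sum_eq_single_of_mem j hj fun k _ hkj => h i j k hkj.symm

theorem trace_pinch_mul [Fintype n] [CommSemiring R] (s : Finset ι) (Q : ι → Matrix n n R)
    (A B : Matrix n n R) : (pinch s Q A * B).trace = (A * pinch s Q B).trace := by
  simp only [pinch, Finset.sum_mul, Finset.mul_sum, trace_sum]
  refine Finset.sum_congr rfl fun i _ => ?_
  rw [Matrix.mul_assoc, Matrix.mul_assoc, trace_mul_comm]
  simp only [Matrix.mul_assoc]

theorem kronecker_finset_sum [NonUnitalNonAssocSemiring R] (s : Finset ι) (A : Matrix l m R)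
    (B : ι → Matrix n p R) : A ⊗ₖ (∑ i ∈ s, B i) = ∑ i ∈ s, A ⊗ₖ B i := by
  ext
  simp [Matrix.sum_apply, Finset.mul_sum]

theorem finset_sum_kronecker [NonUnitalNonAssocSemiring R] (s : Finset ι)
    (A : ι → Matrix l m R) (B : Matrix n p R) : (∑ i ∈ s, A i) ⊗ₖ B = ∑ i ∈ s, A i ⊗ₖ B := by
  ext
  simp [Matrix.sum_apply, Finset.sum_mul]

variable [Fintype n] [Fintype m] [CommSemiring R]

theorem pinch_kronecker [DecidableEq m] (s : Finset ι) (Q : ι → Matrix n n R)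
    (A : Matrix n n R) (B : Matrix m m R) :
    pinch s Q A ⊗ₖ B = pinch s (fun i => Q i ⊗ₖ 1) (A ⊗ₖ B) := by
  simp only [pinch, finset_sum_kronecker, ← mul_kronecker_mul, one_mul, mul_one]

theorem kronecker_pinch [DecidableEq n] (s : Finset ι) (Q : ι → Matrix m m R)
    (A : Matrix n n R) (B : Matrix m m R) :
    A ⊗ₖ pinch s Q B = pinch s (fun i => 1 ⊗ₖ Q i) (A ⊗ₖ B) := by
  simp only [pinch, kronecker_finset_sum, ← mul_kronecker_mul, one_mul, mul_one]

theorem kronecker_mul_kronecker_eq_zero {P : ι → Matrix n n R} {Q : κ → Matrix m m R}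
    (hP : ∀ i j, i ≠ j → P i * P j = 0) (hQ : ∀ i j, i ≠ j → Q i * Q j = 0) {p q : ι × κ}
    (hpq : p ≠ q) : (P p.1 ⊗ₖ Q p.2) * (P q.1 ⊗ₖ Q q.2) = 0 := by
  rw [← mul_kronecker_mul]
  by_cases hfst : p.1 = q.1
  · rw [hQ _ _ fun hsnd => hpq (Prod.ext hfst hsnd), kronecker_zero]
  · rw [hP _ _ hfst, zero_kronecker]

end Pinch

section Invariant

variable {dS dR : ℕ} {SS SR : Finset ℤ}
  {PS : ℤ → Matrix (Fin dS) (Fin dS) ℂ} {PR : ℤ → Matrix (Fin dR) (Fin dR) ℂ}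
  {E : Matrix (Fin dS × Fin dR) (Fin dS × Fin dR) ℂ}

theorem kronecker_mul_jointProj_eq_zero (hPS : ∀ n m, n ≠ m → PS n * PS m = 0)
    (hPR : ∀ n m, n ≠ m → PR n * PR m = 0) {a b N : ℤ} (hN : a + b ≠ N) :
    (PS a ⊗ₖ PR b) * jointProj SS SR PS PR N = 0 := by
  rw [jointProj, Finset.mul_sum]
  refine Finset.sum_eq_zero fun q hq =>
    kronecker_mul_kronecker_eq_zero hPS hPR (p := (a, b)) ?_
  rintro rfl
  exact hN (Finset.mem_filter.mp hq).2

theorem jointProj_mul_kronecker_eq_zero (hPS : ∀ n m, n ≠ m → PS n * PS m = 0)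
    (hPR : ∀ n m, n ≠ m → PR n * PR m = 0) {a b N : ℤ} (hN : a + b ≠ N) :
    jointProj SS SR PS PR N * (PS a ⊗ₖ PR b) = 0 := by
  rw [jointProj, Finset.sum_mul]
  refine Finset.sum_eq_zero fun q hq =>
    kronecker_mul_kronecker_eq_zero hPS hPR (q := (a, b)) ?_
  rintro rfl
  exact hN (Finset.mem_filter.mp hq).2

theorem kronecker_mul_mul_kronecker_eq_zero_of_tauTotal_eq
    (hPS : ∀ n m, n ≠ m → PS n * PS m = 0) (hPR : ∀ n m, n ≠ m → PR n * PR m = 0)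
    (hE : tauTotal SS SR PS PR E = E) {a b a' b' : ℤ} (hne : a + b ≠ a' + b') :
    (PS a ⊗ₖ PR b) * E * (PS a' ⊗ₖ PR b') = 0 := by
  rw [← hE]
  refine mul_pinch_mul_eq_zero E fun N _ => ?_
  by_cases hN : a + b = N
  · exact .inr (jointProj_mul_kronecker_eq_zero hPS hPR (hN ▸ hne.symm))
  · exact .inl (kronecker_mul_jointProj_eq_zero hPS hPR hN)

theorem pinch_left_eq_pinch_right_of_tauTotal_eq
    (hPS : ∀ n m, n ≠ m → PS n * PS m = 0) (hPSsum : ∑ n ∈ SS, PS n = 1)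
    (hPR : ∀ n m, n ≠ m → PR n * PR m = 0) (hPRsum : ∑ m ∈ SR, PR m = 1)
    (hE : tauTotal SS SR PS PR E = E) :
    pinch SS (fun n => PS n ⊗ₖ 1) E = pinch SR (fun m => 1 ⊗ₖ PR m) E := by
  have hblock {a b a' b' : ℤ} (hne : a + b ≠ a' + b') :
      (PS a ⊗ₖ PR b) * E * (PS a' ⊗ₖ PR b') = 0 :=
    kronecker_mul_mul_kronecker_eq_zero_of_tauTotal_eq hPS hPR hE hne
  calc pinch SS (fun n => PS n ⊗ₖ 1) E
      = ∑ n ∈ SS, ∑ m ∈ SR, (PS n ⊗ₖ PR m) * E * (PS n ⊗ₖ PR m) := by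
        simp only [← hPRsum, kronecker_finset_sum]
        exact pinch_sum_of_offDiag_eq_zero _ _ _ _ fun n m m' hne => hblock (by omega)
    _ = ∑ m ∈ SR, ∑ n ∈ SS, (PS n ⊗ₖ PR m) * E * (PS n ⊗ₖ PR m) := Finset.sum_comm
    _ = pinch SR (fun m => 1 ⊗ₖ PR m) E := by
        simp only [← hPSsum, finset_sum_kronecker]
        exact (pinch_sum_of_offDiag_eq_zero SR SS (fun m n => PS n ⊗ₖ PR m) E
          fun m n n' hne => hblock (by omega)).symm

theorem trace_dephase_kronecker_mul_eq_trace_kronecker_dephase_mul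
    (hPS : ∀ n m, n ≠ m → PS n * PS m = 0) (hPSsum : ∑ n ∈ SS, PS n = 1)
    (hPR : ∀ n m, n ≠ m → PR n * PR m = 0) (hPRsum : ∑ m ∈ SR, PR m = 1)
    (hE : tauTotal SS SR PS PR E = E)
    (A : Matrix (Fin dS) (Fin dS) ℂ) (B : Matrix (Fin dR) (Fin dR) ℂ) :
    ((dephase SS PS A ⊗ₖ B) * E).trace = ((A ⊗ₖ dephase SR PR B) * E).trace := by
  change ((pinch SS PS A ⊗ₖ B) * E).trace = ((A ⊗ₖ pinch SR PR B) * E).trace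
  rw [pinch_kronecker, kronecker_pinch, trace_pinch_mul, trace_pinch_mul,
    pinch_left_eq_pinch_right_of_tauTotal_eq hPS hPSsum hPR hPRsum hE]

end Invariant

section Coherence

theorem absCoherence_nonneg {d : ℕ} (S : Finset ℤ) (P : ℤ → Matrix (Fin d) (Fin d) ℂ)
    (ρ : Matrix (Fin d) (Fin d) ℂ) : 0 ≤ absCoherence S P ρ := by
  refine Real.sSup_nonneg ?_
  rintro _ ⟨E, -, -, rfl⟩
  exact norm_nonneg _

theorem absCoherence_eq_zero_of_dephase_eq {d : ℕ} {S : Finset ℤ}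
    {P : ℤ → Matrix (Fin d) (Fin d) ℂ} {ρ : Matrix (Fin d) (Fin d) ℂ}
    (h : dephase S P ρ = ρ) : absCoherence S P ρ = 0 := by
  refine le_antisymm (Real.sSup_le ?_ le_rfl) (absCoherence_nonneg S P ρ)
  rintro _ ⟨E, -, -, rfl⟩
  rw [h, sub_self, norm_zero]

theorem norm_trace_sub_trace_dephase_le_absCoherence {d : ℕ} (S : Finset ℤ)
    (P : ℤ → Matrix (Fin d) (Fin d) ℂ) (ρ : Matrix (Fin d) (Fin d) ℂ)
    {E : Matrix (Fin d) (Fin d) ℂ} (hE : IsEffect E) :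
    ‖(ρ * E).trace - (dephase S P ρ * E).trace‖ ≤ absCoherence S P ρ := by
  obtain ⟨c, hc⟩ := exists_norm_apply_isEffect_le
    (traceLinearMap (Fin d) ℂ ℂ ∘ₗ LinearMap.mulLeft ℂ (ρ - dephase S P ρ))
  refine le_csSup ⟨c, ?_⟩ ⟨E, hE.posSemidef, hE.one_sub_posSemidef, rfl⟩
  rintro _ ⟨F, hF, hF', rfl⟩
  simpa [sub_mul] using hc F ⟨hF, hF'⟩

variable {dS dR : ℕ} (SS SR : Finset ℤ)
  (PS : ℤ → Matrix (Fin dS) (Fin dS) ℂ) (PR : ℤ → Matrix (Fin dR) (Fin dR) ℂ)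
  (ρS : Matrix (Fin dS) (Fin dS) ℂ) (ρR : Matrix (Fin dR) (Fin dR) ℂ)

theorem mutCoherence_nonneg : 0 ≤ mutCoherence SS SR PS PR ρS ρR := by
  refine Real.sSup_nonneg ?_
  rintro _ ⟨E, -, -, -, rfl⟩
  exact norm_nonneg _

variable {SS SR PS PR ρS ρR}

theorem mutCoherence_le_absCoherence_left (hρR : ρR.PosSemidef) (hρRtr : ρR.trace = 1) :
    mutCoherence SS SR PS PR ρS ρR ≤ absCoherence SS PS ρS := by
  refine Real.sSup_le ?_ (absCoherence_nonneg _ _ _)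
  rintro _ ⟨E, hE, hE', -, rfl⟩
  rw [sub_mul, trace_sub, norm_sub_rev, trace_kronecker_mul_eq_trace_mul_slice,
    trace_kronecker_mul_eq_trace_mul_slice]
  exact norm_trace_sub_trace_dephase_le_absCoherence SS PS ρS
    (isEffect_slice hρR hρRtr ⟨hE, hE'⟩)

theorem mutCoherence_le_absCoherence_right
    (hPS : ∀ n m, n ≠ m → PS n * PS m = 0) (hPSsum : ∑ n ∈ SS, PS n = 1)
    (hPR : ∀ n m, n ≠ m → PR n * PR m = 0) (hPRsum : ∑ m ∈ SR, PR m = 1)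
    (hρS : ρS.PosSemidef) (hρStr : ρS.trace = 1) :
    mutCoherence SS SR PS PR ρS ρR ≤ absCoherence SR PR ρR := by
  refine Real.sSup_le ?_ (absCoherence_nonneg _ _ _)
  rintro _ ⟨E, hE, hE', hinv, rfl⟩
  have hswap : IsEffect (E.submatrix (Equiv.prodComm _ _) (Equiv.prodComm _ _)) :=
    IsEffect.submatrix_equiv ⟨hE, hE'⟩ (Equiv.prodComm (Fin dR) (Fin dS))
  rw [sub_mul, trace_sub, norm_sub_rev,
    trace_dephase_kronecker_mul_eq_trace_kronecker_dephase_mul hPS hPSsum hPR hPRsum hinv,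
    trace_kronecker_mul_eq_trace_swap, trace_kronecker_mul_eq_trace_swap ρS,
    trace_kronecker_mul_eq_trace_mul_slice, trace_kronecker_mul_eq_trace_mul_slice]
  exact norm_trace_sub_trace_dephase_le_absCoherence SR PR ρR (isEffect_slice hρS hρStr hswap)

end Coherence

theorem mutCoherence_le_absCoherence_general {dS dR : ℕ} {SS SR : Finset ℤ}
    {PS : ℤ → Matrix (Fin dS) (Fin dS) ℂ} {PR : ℤ → Matrix (Fin dR) (Fin dR) ℂ}
    (hPS : ∀ n m, n ≠ m → PS n * PS m = 0) (hPSsum : ∑ n ∈ SS, PS n = 1)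
    (hPR : ∀ n m, n ≠ m → PR n * PR m = 0) (hPRsum : ∑ m ∈ SR, PR m = 1)
    {ρS : Matrix (Fin dS) (Fin dS) ℂ} (hρS : ρS.PosSemidef) (hρStr : ρS.trace = 1)
    {ρR : Matrix (Fin dR) (Fin dR) ℂ} (hρR : ρR.PosSemidef) (hρRtr : ρR.trace = 1) :
    (mutCoherence SS SR PS PR ρS ρR
      ≤ min (absCoherence SS PS ρS) (absCoherence SR PR ρR)) ∧
    (dephase SR PR ρR = ρR → mutCoherence SS SR PS PR ρS ρR = 0) ∧
    (dephase SS PS ρS = ρS → mutCoherence SS SR PS PR ρS ρR = 0) := by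
  have hleft : mutCoherence SS SR PS PR ρS ρR ≤ absCoherence SS PS ρS :=
    mutCoherence_le_absCoherence_left hρR hρRtr
  have hright : mutCoherence SS SR PS PR ρS ρR ≤ absCoherence SR PR ρR :=
    mutCoherence_le_absCoherence_right hPS hPSsum hPR hPRsum hρS hρStr
  have hnonneg := mutCoherence_nonneg SS SR PS PR ρS ρR
  refine ⟨le_min hleft hright, fun hinv => ?_, fun hinv => ?_⟩
  · exact le_antisymm (hright.trans_eq (absCoherence_eq_zero_of_dephase_eq hinv)) hnonneg
  · exact le_antisymm (hleft.trans_eq (absCoherence_eq_zero_of_dephase_eq hinv)) hnonneg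

/-- **Mutual coherence is bounded by absolute coherence**:
`M(ρ_S, ρ_R) ≤ min{C(ρ_S), C(ρ_R)}`; in particular `M = 0` whenever either state is
invariant. -/
theorem mutCoherence_le_absCoherence {dS dR : ℕ}
    (SS SR : Finset ℤ)
    (PS : ℤ → Matrix (Fin dS) (Fin dS) ℂ) (PR : ℤ → Matrix (Fin dR) (Fin dR) ℂ)
    (hPSh : ∀ n, (PS n).IsHermitian) (hPSi : ∀ n, PS n * PS n = PS n)
    (hPSo : ∀ n m, n ≠ m → PS n * PS m = 0)
    (hPSsupp : ∀ n, n ∉ SS → PS n = 0) (hPSsum : ∑ n ∈ SS, PS n = 1)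
    (hPRh : ∀ m, (PR m).IsHermitian) (hPRi : ∀ m, PR m * PR m = PR m)
    (hPRo : ∀ n m, n ≠ m → PR n * PR m = 0)
    (hPRsupp : ∀ m, m ∉ SR → PR m = 0) (hPRsum : ∑ m ∈ SR, PR m = 1)
    (ρS : Matrix (Fin dS) (Fin dS) ℂ) (hρS : ρS.PosSemidef) (hρStr : ρS.trace = 1)
    (ρR : Matrix (Fin dR) (Fin dR) ℂ) (hρR : ρR.PosSemidef) (hρRtr : ρR.trace = 1) :
    (mutCoherence SS SR PS PR ρS ρR
      ≤ min (absCoherence SS PS ρS) (absCoherence SR PR ρR)) ∧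
    (dephase SR PR ρR = ρR → mutCoherence SS SR PS PR ρS ρR = 0) ∧
    (dephase SS PS ρS = ρS → mutCoherence SS SR PS PR ρS ρR = 0) :=
  mutCoherence_le_absCoherence_general hPSo hPSsum hPRo hPRsum hρS hρStr hρR hρRtr

end
end
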